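/- Fix integers d,e ≥ 1 and n ≥ 0. For all full binary trees t, t' ∈ T_n, the two conditions ld(t) ~^d ld(t') and rd(t) ~^e rd(t') both hold if and only if φ(t) = φ(t'). In particular, the equivalence classes of the relation 't ~ t' iff ld(t) ~^d ld(t') and rd(t) ~^e rd(t')' on T_n are exactly the fibers of the map φ. -/

import Mathlib

/-- Full binary trees (every internal node has exactly two children). -/
inductive BTree : Type
  | leaf : BTree
  | node : BTree → BTree → BTree
deriving DecidableEq

namespace BTree

/-- Number of leaves of a full binary tree. -/
def numLeaves : BTree → ℕ
  | leaf => 1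
  | node l r => l.numLeaves + r.numLeaves

/-- The list of pairs (left depth, right depth) of the leaves, in preorder. -/
def leafDepths : BTree → List (ℕ × ℕ)
  | leaf => [(0, 0)]
  | node l r =>
      (l.leafDepths.map fun p => (p.1 + 1, p.2)) ++ (r.leafDepths.map fun p => (p.1, p.2 + 1))

/-- The left depth sequence `ld(t)` of the leaves of `t`, in preorder. -/
def ld (t : BTree) : List ℕ := t.leafDepths.map Prod.fst

/-- The right depth sequence `rd(t)` of the leaves of `t`, in preorder. -/
def rd (t : BTree) : List ℕ := t.leafDepths.map Prod.snd

end BTree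

/-- `b ~^d c` : the sequences have equal length and agree at every position where
either entry is `< d`. -/
def DepthEq (d : ℕ) : List ℕ → List ℕ → Prop :=
  List.Forall₂ (fun a b => min a b < d → a = b)

/-- `b ~_k c` : entrywise congruence mod `k` (and equal length). -/
def ModListEq (k : ℕ) : List ℕ → List ℕ → Prop :=
  List.Forall₂ (fun a b => a % k = b % k)

/-- The relation `t ~ t'` iff `ld(t) ~^d ld(t')` and `rd(t) ~^e rd(t')`. -/
def DeRel (d e : ℕ) (t t' : BTree) : Prop :=
  DepthEq d t.ld t'.ld ∧ DepthEq e t.rd t'.rd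

/-- The relation `t ~ t'` iff `ld(t) ~_k^d ld(t')` (i.e. `ld(t) ~_k ld(t')` and
`ld(t) ~^d ld(t')`). -/
def DkRel (d k : ℕ) (t t' : BTree) : Prop :=
  ModListEq k t.ld t'.ld ∧ DepthEq d t.ld t'.ld

/-- `T_n`: full binary trees with `n+1` leaves. -/
def Tn (n : ℕ) : Type := {t : BTree // t.numLeaves = n + 1}

/-- `C^{d,e}_n`: the number of equivalence classes of the relation `DeRel d e` on `T_n`. -/
noncomputable def Cde (d e n : ℕ) : ℕ :=
  Nat.card (Quot (fun t t' : Tn n => DeRel d e t.1 t'.1))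

/-- `C^d_{k,n}`: the number of equivalence classes of `ld(t) ~_k^d ld(t')` on `T_n`. -/
noncomputable def Cdk (d k n : ℕ) : ℕ :=
  Nat.card (Quot (fun t t' : Tn n => DkRel d k t.1 t'.1))

/-- Leaf-weighted binary trees. -/
inductive WTree : Type
  | leaf : ℕ → WTree
  | node : WTree → WTree → WTree
deriving DecidableEq

/-- `phiAux d e ldep rdep t`: the result of contracting, in the tree `t` whose root sits at
a node of left depth `ldep` and right depth `rdep`, the maximal subtree of each maximal
`(d,e)`-contractible node to a single leaf weighted by its number of leaves, all remaining
leaves getting weight `1`.  (A node is `(d,e)`-contractible if its left depth is at least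
`d-1` and its right depth is at least `e-1`; a contractible node is maximal if its parent
is not contractible.  Every descendant of a contractible node is contractible, so the
top-down recursion below contracts exactly at the maximal contractible nodes.) -/
def phiAux (d e : ℕ) : ℕ → ℕ → BTree → WTree
  | _, _, BTree.leaf => WTree.leaf 1
  | ldep, rdep, BTree.node l r =>
      if d - 1 ≤ ldep ∧ e - 1 ≤ rdep then WTree.leaf (BTree.node l r).numLeaves
      else WTree.node (phiAux d e (ldep + 1) rdep l) (phiAux d e ldep (rdep + 1) r)

/-- The map `φ` of the paper, applied starting at the root (left depth 0, right depth 0). -/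
def phi (d e : ℕ) (t : BTree) : WTree := phiAux d e 0 0 t


/-- The pointwise relation, for subtrees rooted at a node of depths `a`, `b`. -/
def PRel (d e a b : ℕ) (p q : ℕ × ℕ) : Prop :=
  (min (p.1 + a) (q.1 + a) < d → p.1 = q.1) ∧ (min (p.2 + b) (q.2 + b) < e → p.2 = q.2)

theorem length_leafDepths (t : BTree) : t.leafDepths.length = t.numLeaves := by
  induction t with
  | leaf => rfl
  | node l r hl hr => simp [BTree.leafDepths, BTree.numLeaves, hl, hr]

theorem numLeaves_pos (t : BTree) : 0 < t.numLeaves := by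
  induction t with
  | leaf => simp [BTree.numLeaves]
  | node l r hl hr => simp [BTree.numLeaves, hl]

theorem exists_last (t : BTree) : ∃ A k, t.leafDepths = A ++ [(0, k)] ∧ ∀ p ∈ A, 1 ≤ p.1 := by
  induction t with
  | leaf => exact ⟨[], 0, rfl, by simp⟩
  | node l r hl hr =>
    obtain ⟨A, k, h, hA⟩ := hr
    refine ⟨l.leafDepths.map (fun p => (p.1 + 1, p.2)) ++ A.map (fun p => (p.1, p.2 + 1)),
      k + 1, ?_, ?_⟩
    · simp [BTree.leafDepths, h]
    · intro p hp
      simp only [List.mem_append, List.mem_map] at hp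
      rcases hp with ⟨q, hq, rfl⟩ | ⟨q, hq, rfl⟩
      · simp
      · exact hA q hq

theorem exists_first (t : BTree) : ∃ B k, t.leafDepths = (k, 0) :: B ∧ ∀ p ∈ B, 1 ≤ p.2 := by
  induction t with
  | leaf => exact ⟨[], 0, rfl, by simp⟩
  | node l r hl hr =>
    obtain ⟨B, k, h, hB⟩ := hl
    refine ⟨B.map (fun p => (p.1 + 1, p.2)) ++ r.leafDepths.map (fun p => (p.1, p.2 + 1)),
      k + 1, ?_, ?_⟩
    · simp [BTree.leafDepths, h]
    · intro p hp
      simp only [List.mem_append, List.mem_map] at hp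
      rcases hp with ⟨q, hq, rfl⟩ | ⟨q, hq, rfl⟩
      · exact hB q hq
      · simp

theorem split_first {α : Type*} {R : α → α → Prop} (P : α → Prop)
    (hRP : ∀ p q, R p q → (P p ↔ P q)) {x x' : α} (hx : P x) (hx' : P x') {B B' : List α} :
    ∀ {A A' : List α}, (∀ p ∈ A, ¬ P p) → (∀ p ∈ A', ¬ P p) →
      List.Forall₂ R (A ++ x :: B) (A' ++ x' :: B') →
      List.Forall₂ R A A' ∧ R x x' ∧ List.Forall₂ R B B'
  | [], [], _, _, h => by
    simp only [List.nil_append, List.forall₂_cons] at h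
    exact ⟨List.Forall₂.nil, h⟩
  | [], y :: A', _, hA', h => by
    simp only [List.nil_append, List.cons_append, List.forall₂_cons] at h
    exact absurd ((hRP _ _ h.1).1 hx) (hA' y (by simp))
  | y :: A, [], hA, _, h => by
    simp only [List.nil_append, List.cons_append, List.forall₂_cons] at h
    exact absurd ((hRP _ _ h.1).2 hx') (hA y (by simp))
  | y :: A, y' :: A', hA, hA', h => by
    simp only [List.cons_append, List.forall₂_cons] at h
    have ih := split_first P hRP hx hx' (A := A) (A' := A')
      (fun p hp => hA p (by simp [hp])) (fun p hp => hA' p (by simp [hp])) h.2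
    exact ⟨List.Forall₂.cons h.1 ih.1, ih.2⟩

theorem forall2_of_length {α : Type*} {R : α → α → Prop} :
    ∀ {A B : List α}, A.length = B.length → (∀ p ∈ A, ∀ q ∈ B, R p q) → List.Forall₂ R A B
  | [], [], _, _ => List.Forall₂.nil
  | [], _ :: _, h, _ => by simp at h
  | _ :: _, [], h, _ => by simp at h
  | x :: A, y :: B, h, hR => List.Forall₂.cons (hR x (by simp) y (by simp))
      (forall2_of_length (by simpa using h)
        (fun p hp q hq => hR p (by simp [hp]) q (by simp [hq])))

theorem forall2_append {α : Type*} {R : α → α → Prop} {A A' B B' : List α}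
    (h : List.Forall₂ R A A') (h' : List.Forall₂ R B B') :
    List.Forall₂ R (A ++ B) (A' ++ B') := by
  induction h with
  | nil => exact h'
  | cons h1 _ ih => exact List.Forall₂.cons h1 ih

theorem forall2_and {α : Type*} {R S : α → α → Prop} {A B : List α} :
    List.Forall₂ (fun p q => R p q ∧ S p q) A B ↔ List.Forall₂ R A B ∧ List.Forall₂ S A B := by
  constructor
  · exact fun h => ⟨h.imp fun _ _ h => h.1, h.imp fun _ _ h => h.2⟩
  · rintro ⟨h, h'⟩
    induction h with
    | nil => exact List.Forall₂.nil
    | cons h1 _ ih =>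
      simp only [List.forall₂_cons] at h' ⊢
      exact ⟨⟨h1, h'.1⟩, ih h'.2⟩

theorem forall2_contract {d e a b : ℕ} (ha : d - 1 ≤ a) (hb : e - 1 ≤ b) (t t' : BTree)
    (h : t.numLeaves = t'.numLeaves) :
    List.Forall₂ (PRel d e a b) t.leafDepths t'.leafDepths := by
  rw [← length_leafDepths, ← length_leafDepths] at h
  refine forall2_and.2 ⟨?_, ?_⟩
  · obtain ⟨A, k, h1, hA⟩ := exists_last t
    obtain ⟨A', k', h1', hA'⟩ := exists_last t'
    rw [h1, h1'] at h ⊢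
    refine forall2_append (forall2_of_length (by simpa using h) ?_) (by simp)
    intro p hp q hq
    have := hA p hp
    have := hA' q hq
    omega
  · obtain ⟨A, k, h1, hA⟩ := exists_first t
    obtain ⟨A', k', h1', hA'⟩ := exists_first t'
    rw [h1, h1'] at h ⊢
    refine List.Forall₂.cons (by simp) (forall2_of_length (by simpa using h) ?_)
    intro p hp q hq
    have := hA p hp
    have := hA' q hq
    omega

theorem forall2_left {d e a b : ℕ} (A B : List (ℕ × ℕ)) :
    List.Forall₂ (PRel d e a b) (A.map fun p => (p.1 + 1, p.2)) (B.map fun p => (p.1 + 1, p.2)) ↔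
      List.Forall₂ (PRel d e (a + 1) b) A B := by
  rw [List.forall₂_map_left_iff, List.forall₂_map_right_iff]
  have : (fun p q : ℕ × ℕ => PRel d e a b (p.1 + 1, p.2) (q.1 + 1, q.2))
      = PRel d e (a + 1) b := by
    funext p q
    simp only [PRel, eq_iff_iff]
    omega
  rw [← this]

theorem forall2_right {d e a b : ℕ} (A B : List (ℕ × ℕ)) :
    List.Forall₂ (PRel d e a b) (A.map fun p => (p.1, p.2 + 1)) (B.map fun p => (p.1, p.2 + 1)) ↔
      List.Forall₂ (PRel d e a (b + 1)) A B := by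
  rw [List.forall₂_map_left_iff, List.forall₂_map_right_iff]
  have : (fun p q : ℕ × ℕ => PRel d e a b (p.1, p.2 + 1) (q.1, q.2 + 1))
      = PRel d e a (b + 1) := by
    funext p q
    simp only [PRel, eq_iff_iff]
    omega
  rw [← this]

theorem forall2_node {d e a b : ℕ} (hab : ¬ (d - 1 ≤ a ∧ e - 1 ≤ b)) (l r l' r' : BTree) :
    List.Forall₂ (PRel d e a b) (BTree.node l r).leafDepths (BTree.node l' r').leafDepths ↔
      List.Forall₂ (PRel d e (a + 1) b) l.leafDepths l'.leafDepths ∧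
      List.Forall₂ (PRel d e a (b + 1)) r.leafDepths r'.leafDepths := by
  rw [← forall2_left, ← forall2_right]
  constructor
  swap
  · exact fun h => forall2_append h.1 h.2
  intro h
  simp only [BTree.leafDepths] at h
  by_cases ha : d - 1 ≤ a
  · have hb : b + 1 < e := by omega
    obtain ⟨A, k, h1, hA⟩ := exists_first r
    obtain ⟨A', k', h1', hA'⟩ := exists_first r'
    rw [← List.forall₂_reverse_iff] at h
    rw [h1, h1'] at h ⊢
    simp only [List.map_cons, List.reverse_append, List.reverse_cons, List.append_assoc,
      List.singleton_append] at h
    obtain ⟨h2, h3, h4⟩ := split_first (fun p : ℕ × ℕ => p.2 ≤ 1)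
      (by intro p q hpq; have := hpq.2; omega) (by simp) (by simp)
      (by
        intro p hp
        simp only [List.mem_reverse, List.mem_map] at hp
        obtain ⟨q, hq, rfl⟩ := hp
        have := hA q hq
        dsimp only; omega)
      (by
        intro p hp
        simp only [List.mem_reverse, List.mem_map] at hp
        obtain ⟨q, hq, rfl⟩ := hp
        have := hA' q hq
        dsimp only; omega) h
    rw [List.forall₂_reverse_iff] at h2 h4
    exact ⟨h4, List.Forall₂.cons h3 h2⟩
  · have hb : a + 1 < d := by omega
    obtain ⟨A, k, h1, hA⟩ := exists_last l
    obtain ⟨A', k', h1', hA'⟩ := exists_last l'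
    rw [h1, h1'] at h ⊢
    simp only [List.map_cons, List.map_append, List.map_nil, List.append_assoc,
      List.singleton_append] at h
    obtain ⟨h2, h3, h4⟩ := split_first (fun p : ℕ × ℕ => p.1 ≤ 1)
      (by intro p q hpq; have := hpq.1; omega) (by simp) (by simp)
      (by
        intro p hp
        simp only [List.mem_map] at hp
        obtain ⟨q, hq, rfl⟩ := hp
        have := hA q hq
        dsimp only; omega)
      (by
        intro p hp
        simp only [List.mem_map] at hp
        obtain ⟨q, hq, rfl⟩ := hp
        have := hA' q hq
        dsimp only; omega) h
    refine ⟨?_, h4⟩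
    rw [List.map_append, List.map_append]
    exact forall2_append h2 (List.Forall₂.cons h3 List.Forall₂.nil)

theorem phiAux_contract {d e a b : ℕ} (hab : d - 1 ≤ a ∧ e - 1 ≤ b) (t : BTree) :
    phiAux d e a b t = WTree.leaf t.numLeaves := by
  cases t with
  | leaf => rfl
  | node l r => simp only [phiAux, if_pos hab]

theorem main_aux (d e : ℕ) (t : BTree) : ∀ (a b : ℕ) (t' : BTree),
    List.Forall₂ (PRel d e a b) t.leafDepths t'.leafDepths ↔
      phiAux d e a b t = phiAux d e a b t' := by
  induction t with
  | leaf =>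
    intro a b t'
    by_cases hab : d - 1 ≤ a ∧ e - 1 ≤ b
    · rw [phiAux_contract hab, phiAux_contract hab, WTree.leaf.injEq]
      refine ⟨fun h => ?_, forall2_contract hab.1 hab.2 _ _⟩
      rw [← length_leafDepths, ← length_leafDepths, h.length_eq]
    cases t' with
    | leaf => simp [BTree.leafDepths, PRel]
    | node l' r' =>
      simp only [phiAux, if_neg hab, reduceCtorEq, iff_false]
      intro h
      have := h.length_eq
      rw [length_leafDepths, length_leafDepths] at this
      have := numLeaves_pos l'
      have := numLeaves_pos r'
      simp only [BTree.numLeaves] at *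
      omega
  | node l r hl hr =>
    intro a b t'
    by_cases hab : d - 1 ≤ a ∧ e - 1 ≤ b
    · rw [phiAux_contract hab, phiAux_contract hab, WTree.leaf.injEq]
      refine ⟨fun h => ?_, forall2_contract hab.1 hab.2 _ _⟩
      rw [← length_leafDepths, ← length_leafDepths, h.length_eq]
    cases t' with
    | leaf =>
      simp only [phiAux, if_neg hab, reduceCtorEq, iff_false]
      intro h
      have := h.length_eq
      rw [length_leafDepths, length_leafDepths] at this
      have := numLeaves_pos l
      have := numLeaves_pos r
      simp only [BTree.numLeaves] at *
      omega
    | node l' r' =>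
      rw [forall2_node hab, hl, hr]
      simp only [phiAux, if_neg hab, WTree.node.injEq]

/-- for `d,e ≥ 1` and `t,t' ∈ T_n`, `ld(t) ~^d ld(t')` and `rd(t) ~^e rd(t')`
both hold iff `φ(t) = φ(t')`; hence the equivalence classes of this relation are exactly
the fibers of `φ`. -/
theorem stmt0 (d e n : ℕ) (hd : 1 ≤ d) (he : 1 ≤ e) (t t' : BTree)
    (ht : t.numLeaves = n + 1) (ht' : t'.numLeaves = n + 1) :
    (DepthEq d t.ld t'.ld ∧ DepthEq e t.rd t'.rd) ↔ phi d e t = phi d e t' := by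
  unfold phi DepthEq BTree.ld BTree.rd
  rw [← main_aux]
  simp only [List.forall₂_map_left_iff, List.forall₂_map_right_iff]
  rw [← forall2_and]
  rfl
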